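/- Let G ∈ F_q^{3×n} be a systematic MDS matrix with n ≥ 6. Then the 3-dimensional Lebesgue measure of the service rate region Λ(G) ⊆ ℝ³ equals (n³ + 18n² + 54n − 18)/162. -/

import Mathlib

open Matrix

/-- The ν-th column of a matrix. -/
def matCol {F : Type} [Field F] {k n : ℕ} (G : Matrix (Fin k) (Fin n) F) (ν : Fin n) :
    Fin k → F :=
  fun r => G r ν

/-- `R ⊆ {1,...,n}` is a recovery set for object `i` if `e_i` lies in the span of the
columns of `G` indexed by `R`. -/
def IsRecoverySet {F : Type} [Field F] {k n : ℕ} (G : Matrix (Fin k) (Fin n) F)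
    (i : Fin k) (R : Finset (Fin n)) : Prop :=
  Pi.single i (1 : F) ∈ Submodule.span F (matCol G '' (R : Set (Fin n)))

/-- The service rate region `Λ(G)` of the system given by all recovery sets of `G`,
with server capacity `1`: the allocation `x i R` is required to vanish on non-recovery
sets, so all sums effectively range over the recovery sets of each object. -/
def SRRG {F : Type} [Field F] {k n : ℕ} (G : Matrix (Fin k) (Fin n) F) :
    Set (Fin k → ℝ) :=
  {lam | ∃ x : Fin k → Finset (Fin n) → ℝ,
    (∀ i R, 0 ≤ x i R) ∧
    (∀ i R, ¬ IsRecoverySet G i R → x i R = 0) ∧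
    (∀ i, ∑ R : Finset (Fin n), x i R = lam i) ∧
    (∀ ν : Fin n, ∑ i, ∑ R : Finset (Fin n), (if ν ∈ R then x i R else 0) ≤ 1)}

/-!
The systematic column of object `i` is a recovery set by itself, but it has capacity `1`, and every
recovery set avoiding it has at least `k` elements. Hence serving object `i` at rate `t` takes
server capacity at least `min t 1 + k * max (t - 1) 0`, and these costs sum to at most `n`.
Conversely, serve `min t 1` from the systematic columns and the excess from `k`-element sets, all of
which are recovery sets. The capacities left over are spread over `k`-element sets by the
integrality of the hypersimplex, a consequence of Birkhoff's theorem on doubly stochastic matrices;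
this needs a total of at least `k` to be left over, whence `2 * k ≤ n`.

So the service rate region is `{l ≥ 0 | ∑ i, cost (l i) ≤ n}`. Slicing along one coordinate, the
volume as a function of the budget `s` is obtained from the step function `1_{s ≥ 0}` by applying,
once per dimension, the operator `(1 + (k⁻¹ - 1) τ) J`, where `J` is integration from `-∞` and `τ`
is translation by `1`. As `τ` and `J` commute, the binomial theorem gives the volume.
-/

section Hypersimplex

open Finset

variable {ι : Type*} [Fintype ι]

lemma card_mul_div_card_of_sum_eq_card {s : Finset ι} {f : ι → ℝ} (hf : ∀ a, 0 ≤ f a)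
    (hsum : ∑ a, f a = #s) (a : ι) : #s * (f a / #s) = f a := by
  refine mul_div_cancel_of_imp' fun hs => ?_
  rw [hs] at hsum
  exact (sum_eq_zero_iff_of_nonneg fun b _ => hf b).1 hsum a (mem_univ a)

variable [DecidableEq ι]

/-- The matrix whose columns indexed by `T` are `u` scaled to sum to `1` and whose other columns
are `1 - u` scaled likewise. For `u` in the hypersimplex with `∑ a, u a = #T` it is doubly
stochastic. -/
noncomputable def hypersimplexMatrix (T : Finset ι) (u : ι → ℝ) : Matrix ι ι ℝ :=
  of fun a b => if b ∈ T then u a / #T else (1 - u a) / #Tᶜ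

variable {T : Finset ι} {u : ι → ℝ}

lemma sum_row_hypersimplexMatrix (h0 : ∀ a, 0 ≤ u a) (hsum : ∑ a, u a = #T) (a : ι) :
    ∑ b ∈ T, hypersimplexMatrix T u a b = u a := by
  calc ∑ b ∈ T, hypersimplexMatrix T u a b
      = ∑ _b ∈ T, u a / #T := sum_congr rfl fun _ hb => by simp [hypersimplexMatrix, hb]
    _ = u a := by
      rw [sum_const, nsmul_eq_mul, card_mul_div_card_of_sum_eq_card h0 hsum]

lemma hypersimplexMatrix_compl (T : Finset ι) (u : ι → ℝ) :
    hypersimplexMatrix Tᶜ (fun a => 1 - u a) = hypersimplexMatrix T u := by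
  ext a b
  by_cases hb : b ∈ T <;> simp [hypersimplexMatrix, hb]

lemma sum_one_sub_eq_card_compl (hsum : ∑ a, u a = #T) : ∑ a, (1 - u a) = #Tᶜ := by
  rw [sum_sub_distrib, hsum, card_compl, Nat.cast_sub (card_le_univ T)]
  simp

lemma sum_col_hypersimplexMatrix (hsum : ∑ a, u a = #T) {b : ι} (hb : b ∈ T) :
    ∑ a, hypersimplexMatrix T u a b = 1 := by
  have hT : (#T : ℝ) ≠ 0 := Nat.cast_ne_zero.2 (card_ne_zero_of_mem hb)
  simp only [hypersimplexMatrix, of_apply, hb, if_true]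
  rw [← sum_div, hsum, div_self hT]

lemma hypersimplexMatrix_mem_doublyStochastic (h0 : ∀ a, 0 ≤ u a) (h1 : ∀ a, u a ≤ 1)
    (hsum : ∑ a, u a = #T) : hypersimplexMatrix T u ∈ doublyStochastic ℝ ι := by
  have h0' (a : ι) : 0 ≤ 1 - u a := sub_nonneg.2 (h1 a)
  refine mem_doublyStochastic_iff_sum.2 ⟨fun a b => ?_, fun a => ?_, fun b => ?_⟩
  · simp only [hypersimplexMatrix, of_apply]
    split_ifs
    exacts [div_nonneg (h0 a) (Nat.cast_nonneg _), div_nonneg (h0' a) (Nat.cast_nonneg _)]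
  · have hcompl : ∑ b ∈ Tᶜ, hypersimplexMatrix T u a b = 1 - u a := by
      rw [← hypersimplexMatrix_compl,
        sum_row_hypersimplexMatrix h0' (sum_one_sub_eq_card_compl hsum)]
    rw [← sum_add_sum_compl T, sum_row_hypersimplexMatrix h0 hsum, hcompl, add_sub_cancel]
  · by_cases hb : b ∈ T
    · exact sum_col_hypersimplexMatrix hsum hb
    · rw [← hypersimplexMatrix_compl,
        sum_col_hypersimplexMatrix (sum_one_sub_eq_card_compl hsum) (mem_compl.2 hb)]

theorem exists_stdSimplex_sum_mem_eq {m : ℕ} (h0 : ∀ a, 0 ≤ u a) (h1 : ∀ a, u a ≤ 1)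
    (hsum : ∑ a, u a = m) :
    ∃ y ∈ stdSimplex ℝ (Finset ι), (∀ R, #R ≠ m → y R = 0) ∧ ∀ a, ∑ R with a ∈ R, y R = u a := by
  have hm : m ≤ Fintype.card ι := by
    have : ∑ a, u a ≤ ∑ _a : ι, (1 : ℝ) := sum_le_sum fun a _ => h1 a
    rw [hsum, sum_const, nsmul_one, card_univ] at this
    exact_mod_cast this
  obtain ⟨T, -, rfl⟩ := exists_subset_card_eq (s := (univ : Finset ι)) hm
  obtain ⟨w, hw0, hw1, hw⟩ := exists_eq_sum_perm_of_mem_doublyStochastic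
    (hypersimplexMatrix_mem_doublyStochastic h0 h1 hsum)
  let preim (σ : Equiv.Perm ι) : Finset ι := T.map σ.symm.toEmbedding
  refine ⟨fun R => ∑ σ with preim σ = R, w σ, ⟨fun R => sum_nonneg fun σ _ => hw0 σ, ?_⟩,
    fun R hR => ?_, fun a => ?_⟩
  · rw [sum_fiberwise, hw1]
  · refine sum_eq_zero fun σ hσ => absurd ?_ hR
    rw [← (mem_filter.1 hσ).2, card_map]
  · calc ∑ R with a ∈ R, ∑ σ with preim σ = R, w σ
        = ∑ σ, if σ a ∈ T then w σ else 0 := by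
          rw [sum_fiberwise_eq_sum_filter, sum_filter]
          simp [preim]
      _ = ∑ b ∈ T, hypersimplexMatrix T u a b := by
          rw [← hw]
          simp only [Matrix.sum_apply, Matrix.smul_apply, smul_eq_mul]
          rw [sum_comm]
          simp [Equiv.Perm.permMatrix, PEquiv.toMatrix_apply, eq_comm]
      _ = u a := sum_row_hypersimplexMatrix h0 hsum a

theorem exists_stdSimplex_mul_sum_mem_le {c : ι → ℝ} (h0 : ∀ a, 0 ≤ c a) (h1 : ∀ a, c a ≤ 1)
    {m : ℕ} (hm : m ≤ ∑ a, c a) {E : ℝ} (hE : m * E ≤ ∑ a, c a) :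
    ∃ y ∈ stdSimplex ℝ (Finset ι), (∀ R, #R ≠ m → y R = 0) ∧
      ∀ a, E * ∑ R with a ∈ R, y R ≤ c a := by
  set C := ∑ a, c a
  have hC : 0 ≤ C := sum_nonneg fun a _ => h0 a
  have hu0 (a : ι) : 0 ≤ m * c a / C := div_nonneg (mul_nonneg m.cast_nonneg (h0 a)) hC
  have hu1 (a : ι) : m * c a / C ≤ 1 :=
    div_le_one_of_le₀ ((mul_le_of_le_one_right m.cast_nonneg (h1 a)).trans hm) hC
  have husum : ∑ a, m * c a / C = m := by
    rw [← sum_div, ← mul_sum]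
    exact mul_div_cancel_of_imp fun h => le_antisymm (hm.trans_eq h) m.cast_nonneg
  obtain ⟨y, hy, hym, hyu⟩ := exists_stdSimplex_sum_mem_eq hu0 hu1 husum
  refine ⟨y, hy, hym, fun a => ?_⟩
  calc E * ∑ R with a ∈ R, y R = c a * (m * E / C) := by rw [hyu]; ring
    _ ≤ c a := mul_le_of_le_one_right (h0 a) (div_le_one_of_le₀ hE hC)

end Hypersimplex

section Cost

/-- The server capacity needed to serve an object at rate `t` when rate up to `1` costs `1` per
unit (the systematic column) and the excess costs `κ` per unit. -/
noncomputable def cost (κ t : ℝ) : ℝ := min t 1 + κ * max (t - 1) 0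

variable {κ t : ℝ}

lemma min_one_add_max_sub_one (t : ℝ) : min t 1 + max (t - 1) 0 = t := by
  rcases le_total t 1 with h | h <;> simp [h]

lemma cost_of_le_one (h : t ≤ 1) : cost κ t = t := by
  simp [cost, h]

lemma cost_of_one_le (h : 1 ≤ t) : cost κ t = κ * t - (κ - 1) := by
  simp only [cost, h, min_eq_right, max_eq_left (sub_nonneg.2 h)]
  ring

lemma cost_nonneg (hκ : 0 ≤ κ) (ht : 0 ≤ t) : 0 ≤ cost κ t :=
  add_nonneg (le_min ht zero_le_one) (mul_nonneg hκ (le_max_right _ _))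

@[fun_prop]
lemma continuous_cost (κ : ℝ) : Continuous (cost κ) := by
  unfold cost
  fun_prop

lemma cost_le_mul_sub (hκ : 1 ≤ κ) {a : ℝ} (ha : a ≤ 1) (hat : a ≤ t) :
    cost κ t ≤ κ * t - (κ - 1) * a := by
  have : (κ - 1) * a ≤ (κ - 1) * min t 1 :=
    mul_le_mul_of_nonneg_left (le_min hat ha) (sub_nonneg.2 hκ)
  rw [cost, eq_sub_of_add_eq' (min_one_add_max_sub_one t)]
  linarith

/-- The demands with total cost at most the budget `s`. -/
def costRegion (κ : ℝ) (d : ℕ) (s : ℝ) : Set (Fin d → ℝ) :=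
  {l | (∀ i, 0 ≤ l i) ∧ ∑ i, cost κ (l i) ≤ s}

end Cost

section ServiceRateRegion

open Finset

section Allocation

variable {α : Type*} [Fintype α] [DecidableEq α]

lemma sum_card_mul_eq_sum_sum_mem (y : Finset α → ℝ) :
    ∑ R, #R * y R = ∑ a, ∑ R with a ∈ R, y R := by
  simp only [sum_filter]
  rw [sum_comm]
  simp

lemma cost_sum_le_sum_card_mul {κ : ℝ} (hκ : 1 ≤ κ) {y : Finset α → ℝ} (hy : ∀ R, 0 ≤ y R) {a : α}
    (hcard : ∀ R, a ∉ R → y R ≠ 0 → κ ≤ #R) (ha : ∑ R with a ∈ R, y R ≤ 1) :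
    cost κ (∑ R, y R) ≤ ∑ R, #R * y R := by
  have hmem : ∑ R with a ∈ R, y R ≤ ∑ R, y R :=
    sum_le_sum_of_subset_of_nonneg (filter_subset _ _) fun R _ _ => hy R
  refine (cost_le_mul_sub hκ ha hmem).trans ?_
  rw [sum_filter, mul_sum, mul_sum, ← sum_sub_distrib]
  refine sum_le_sum fun R _ => ?_
  by_cases haR : a ∈ R
  · have hR : (1 : ℝ) ≤ #R := mod_cast card_pos.2 ⟨a, haR⟩
    calc κ * y R - (κ - 1) * (if a ∈ R then y R else 0) = 1 * y R := by rw [if_pos haR]; ring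
      _ ≤ #R * y R := mul_le_mul_of_nonneg_right hR (hy R)
  · rw [if_neg haR, mul_zero, sub_zero]
    rcases eq_or_ne (y R) 0 with h | h
    · simp [h]
    · exact mul_le_mul_of_nonneg_right (hcard R haR h) (hy R)

end Allocation

section TwoTierAllocation

variable {ι α : Type*} [DecidableEq α] {e : ι → α} {lam : ι → ℝ}

/-- The allocation serving object `i` at rate `min (lam i) 1` from the server `e i` and
distributing the excess rate over the sets of servers according to the weights `y`. -/
noncomputable def twoTierAllocation (e : ι → α) (lam : ι → ℝ) (y : Finset α → ℝ)
    (i : ι) (R : Finset α) : ℝ :=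
  (if R = {e i} then min (lam i) 1 else 0) + max (lam i - 1) 0 * y R

lemma sum_twoTierAllocation [Fintype α] {y : Finset α → ℝ} (hy : ∑ R, y R = 1) (i : ι) :
    ∑ R, twoTierAllocation e lam y i R = lam i := by
  simp only [twoTierAllocation, sum_add_distrib, ← mul_sum, hy, mul_one, sum_ite_eq', mem_univ,
    if_true, min_one_add_max_sub_one]

variable [Fintype ι]

/-- The capacity of server `a` left after each object `i` is served at rate `min (lam i) 1` by
server `e i`. -/
noncomputable def residualCapacity (e : ι → α) (lam : ι → ℝ) (a : α) : ℝ :=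
  1 - ∑ i with e i = a, min (lam i) 1

lemma residualCapacity_le_one (hlam : ∀ i, 0 ≤ lam i) (a : α) :
    residualCapacity e lam a ≤ 1 :=
  sub_le_self _ (sum_nonneg fun i _ => le_min (hlam i) zero_le_one)

lemma residualCapacity_nonneg (he : Function.Injective e) (a : α) :
    0 ≤ residualCapacity e lam a := by
  rw [residualCapacity, sub_nonneg]
  by_cases ha : ∃ i, e i = a
  · obtain ⟨i, rfl⟩ := ha
    have hfiber : ({j | e j = e i} : Finset ι) = {i} := by
      ext
      simp [he.eq_iff]
    simp [hfiber]
  · push Not at ha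
    simp [ha]

lemma sum_residualCapacity [Fintype α] (e : ι → α) (lam : ι → ℝ) :
    ∑ a, residualCapacity e lam a = Fintype.card α - ∑ i, min (lam i) 1 := by
  simp only [residualCapacity, sum_sub_distrib, sum_fiberwise]
  simp

lemma sum_mem_twoTierAllocation [Fintype α] (e : ι → α) (lam : ι → ℝ) (y : Finset α → ℝ) (a : α) :
    ∑ i, ∑ R with a ∈ R, twoTierAllocation e lam y i R =
      1 - residualCapacity e lam a + (∑ i, max (lam i - 1) 0) * ∑ R with a ∈ R, y R := by
  have hsingle (i : ι) : ∑ R : Finset α with a ∈ R, (if R = {e i} then min (lam i) 1 else 0) =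
      if e i = a then min (lam i) 1 else 0 := by
    simp [sum_ite_eq', eq_comm]
  simp only [twoTierAllocation, sum_add_distrib, ← mul_sum, hsingle, residualCapacity,
    sub_sub_cancel, sum_mul, sum_filter]

end TwoTierAllocation

section Code

variable {F : Type} [Field F] {k n : ℕ} {G : Matrix (Fin k) (Fin n) F}

/-- Maximum distance separable: any `k` columns of the `k × n` matrix are linearly independent. -/
def IsMDS (G : Matrix (Fin k) (Fin n) F) : Prop :=
  ∀ S : Finset (Fin n), #S = k → LinearIndependent F fun ν : {x // x ∈ S} => matCol G ν.1

/-- Systematic: the first `k` columns form the identity matrix. -/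
def IsSystematic (hkn : k ≤ n) (G : Matrix (Fin k) (Fin n) F) : Prop :=
  ∀ j : Fin k, matCol G (Fin.castLE hkn j) = Pi.single j 1

lemma IsMDS.isRecoverySet (hG : IsMDS G) (i : Fin k) {R : Finset (Fin n)} (hR : #R = k) :
    IsRecoverySet G i R := by
  have htop := (hG R hR).span_eq_top_of_card_eq_finrank' (by simp [hR])
  rw [← Function.comp_def (matCol G), Set.range_comp, Subtype.range_coe_subtype] at htop
  exact Submodule.eq_top_iff'.1 htop _

lemma IsSystematic.isRecoverySet_singleton {hkn : k ≤ n} (hG : IsSystematic hkn G) (i : Fin k) :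
    IsRecoverySet G i {Fin.castLE hkn i} := by
  rw [IsRecoverySet, ← hG i]
  exact Submodule.subset_span ⟨_, by simp, rfl⟩

lemma IsRecoverySet.le_card {hkn : k ≤ n} (hsys : IsSystematic hkn G) (hmds : IsMDS G) {i : Fin k}
    {R : Finset (Fin n)} (hR : IsRecoverySet G i R) (hi : Fin.castLE hkn i ∉ R) : k ≤ #R := by
  by_contra! hlt
  obtain ⟨S, hRS, hS⟩ := exists_superset_card_eq (n := k)
    (by rwa [card_insert_of_notMem hi]) (by simpa using hkn)
  obtain ⟨hiS, hRS⟩ := insert_subset_iff.1 hRS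
  refine linearIndependent_iff_notMem_span.1 (hmds S hS) ⟨_, hiS⟩ ?_
  rw [IsRecoverySet, ← hsys i] at hR
  refine Submodule.span_mono ?_ hR
  rintro _ ⟨ν, hν, rfl⟩
  have hne : ν ≠ Fin.castLE hkn i := ne_of_mem_of_not_mem hν hi
  exact ⟨⟨ν, hRS hν⟩, by simpa using hne, rfl⟩

theorem srrg_subset_costRegion {hkn : k ≤ n} (hsys : IsSystematic hkn G) (hmds : IsMDS G) :
    SRRG G ⊆ costRegion k k n := by
  rintro lam ⟨x, hx0, hxrec, hxlam, hxcap⟩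
  simp only [← sum_filter] at hxcap
  refine ⟨fun i => hxlam i ▸ sum_nonneg fun R _ => hx0 i R, ?_⟩
  have hcost (i : Fin k) : cost k (lam i) ≤ ∑ R, #R * x i R := by
    have hk : (1 : ℝ) ≤ k := mod_cast i.pos
    have hload : ∑ R with Fin.castLE hkn i ∈ R, x i R ≤ 1 :=
      (single_le_sum (fun j _ => sum_nonneg fun R _ => hx0 j R) (mem_univ i)).trans (hxcap _)
    rw [← hxlam i]
    refine cost_sum_le_sum_card_mul hk (hx0 i) (fun R hR hne => ?_) hload
    have hrec : IsRecoverySet G i R := by_contra fun h => hne (hxrec i R h)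
    exact_mod_cast hrec.le_card hsys hmds hR
  calc ∑ i, cost k (lam i) ≤ ∑ i, ∑ R, #R * x i R := sum_le_sum fun i _ => hcost i
    _ = ∑ ν, ∑ i, ∑ R with ν ∈ R, x i R := by
      simp only [sum_card_mul_eq_sum_sum_mem]
      exact sum_comm
    _ ≤ ∑ _ν : Fin n, (1 : ℝ) := sum_le_sum fun ν _ => hxcap ν
    _ = n := by simp

theorem costRegion_subset_srrg {hkn : k ≤ n} (hsys : IsSystematic hkn G) (hmds : IsMDS G)
    (h2k : 2 * k ≤ n) : costRegion k k n ⊆ SRRG G := by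
  rintro lam ⟨hlam, hcost⟩
  let e : Fin k → Fin n := Fin.castLE hkn
  have htotal : ∑ ν, residualCapacity e lam ν = n - ∑ i, min (lam i) 1 := by
    simpa using sum_residualCapacity e lam
  have hk : (k : ℝ) ≤ ∑ ν, residualCapacity e lam ν := by
    have hmin : ∑ i, min (lam i) 1 ≤ ∑ _i : Fin k, (1 : ℝ) :=
      sum_le_sum fun i _ => min_le_right _ _
    have hn : (2 * k : ℝ) ≤ n := mod_cast h2k
    simp only [sum_const, card_univ, Fintype.card_fin, nsmul_one] at hmin
    linarith
  have hexcess : k * ∑ i, max (lam i - 1) 0 ≤ ∑ ν, residualCapacity e lam ν := by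
    simp only [cost, sum_add_distrib, ← mul_sum] at hcost
    linarith
  obtain ⟨y, ⟨hy0, hy1⟩, hyk, hyload⟩ := exists_stdSimplex_mul_sum_mem_le
    (residualCapacity_nonneg (Fin.castLE_injective hkn)) (residualCapacity_le_one hlam) hk hexcess
  refine ⟨twoTierAllocation e lam y, fun i R => ?_, fun i R hR => ?_, sum_twoTierAllocation hy1,
    fun ν => ?_⟩
  · have hmin : 0 ≤ min (lam i) 1 := le_min (hlam i) zero_le_one
    exact add_nonneg (by split_ifs <;> simp [hmin]) (mul_nonneg (le_max_right _ _) (hy0 R))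
  · have hne : R ≠ {e i} := fun h => hR (h ▸ hsys.isRecoverySet_singleton i)
    have hcard : #R ≠ k := fun h => hR (hmds.isRecoverySet i h)
    simp [twoTierAllocation, hne, hyk R hcard]
  · simp only [← sum_filter]
    rw [sum_mem_twoTierAllocation]
    linarith [hyload ν]

end Code

end ServiceRateRegion

section Volume

open MeasureTheory Set

/-- The truncated power `t₊ ^ m`. For `m = 0` it is the indicator of `[0, ∞)`, rather than the
constant `max t 0 ^ 0 = 1`, so that it is the volume of
the zero-dimensional region of budget `t`. -/
noncomputable def truncPow (m : ℕ) (t : ℝ) : ℝ := if 0 ≤ t then t ^ m else 0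

lemma truncPow_of_nonneg (m : ℕ) {t : ℝ} (ht : 0 ≤ t) : truncPow m t = t ^ m := if_pos ht

lemma truncPow_sub_eq_indicator (m : ℕ) (s : ℝ) :
    (fun y => truncPow m (s - y)) = (Iic s).indicator fun y => (s - y) ^ m := by
  ext y
  simp [truncPow, indicator]

lemma integrableOn_Ioi_truncPow_sub (m : ℕ) (s a : ℝ) :
    IntegrableOn (fun y => truncPow m (s - y)) (Ioi a) := by
  rw [truncPow_sub_eq_indicator, IntegrableOn, integrable_indicator_iff measurableSet_Iic,
    IntegrableOn, Measure.restrict_restrict measurableSet_Iic, inter_comm, Ioi_inter_Iic]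
  exact Continuous.integrableOn_Ioc (by fun_prop)

lemma integral_Ioi_truncPow_sub (m : ℕ) (s a : ℝ) :
    ∫ y in Ioi a, truncPow m (s - y) = truncPow (m + 1) (s - a) / (m + 1) := by
  rw [truncPow_sub_eq_indicator, setIntegral_indicator measurableSet_Iic, Ioi_inter_Iic]
  rcases le_total a s with h | h
  · rw [← intervalIntegral.integral_of_le h,
      intervalIntegral.integral_comp_sub_left (fun x => x ^ m), integral_pow,
      truncPow_of_nonneg _ (sub_nonneg.2 h)]
    simp
  · rw [Ioc_eq_empty h.not_gt]
    rcases h.eq_or_lt with rfl | h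
    · simp [truncPow]
    · simp [truncPow, h.not_ge]

variable {κ : ℝ}

lemma truncPow_sub_cost_of_one_le (m : ℕ) (s : ℝ) {y : ℝ} (hy : 1 ≤ y) :
    truncPow m (s - cost κ y) = truncPow m (s - 1 + κ - κ * y) := by
  rw [cost_of_one_le hy]
  ring_nf

lemma integrableOn_Ioi_truncPow_sub_cost (hκ : 0 < κ) (m : ℕ) (s : ℝ) :
    IntegrableOn (fun y => truncPow m (s - cost κ y)) (Ioi 0) := by
  rw [← Ioc_union_Ioi_eq_Ioi zero_le_one]
  refine IntegrableOn.union ?_ ?_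
  · refine ((integrableOn_Ioi_truncPow_sub m s 0).mono_set Ioc_subset_Ioi_self).congr_fun
      (fun y hy => ?_) measurableSet_Ioc
    simp only [cost_of_le_one hy.2]
  · refine IntegrableOn.congr_fun ?_
      (fun y hy => (truncPow_sub_cost_of_one_le m s (le_of_lt hy)).symm) measurableSet_Ioi
    exact (integrableOn_Ioi_comp_mul_left_iff (fun z => truncPow m (s - 1 + κ - z)) 1 hκ).2
      (integrableOn_Ioi_truncPow_sub m _ _)

lemma integral_Ioi_truncPow_sub_cost (hκ : 0 < κ) (m : ℕ) (s : ℝ) :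
    ∫ y in Ioi 0, truncPow m (s - cost κ y) =
      (truncPow (m + 1) s + (κ⁻¹ - 1) * truncPow (m + 1) (s - 1)) / (m + 1) := by
  have hint := integrableOn_Ioi_truncPow_sub_cost hκ m s
  have hsplit := Ioc_union_Ioi_eq_Ioi (zero_le_one (α := ℝ))
  have hlow : ∫ y in Ioc 0 1, truncPow m (s - cost κ y) =
      truncPow (m + 1) s / (m + 1) - truncPow (m + 1) (s - 1) / (m + 1) := by
    rw [setIntegral_congr_fun measurableSet_Ioc
      (g := fun y => truncPow m (s - y)) fun y hy => by simp only [cost_of_le_one hy.2]]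
    have h0 := integral_Ioi_truncPow_sub m s 0
    rw [← hsplit, setIntegral_union Ioc_disjoint_Ioi_same measurableSet_Ioi
      ((integrableOn_Ioi_truncPow_sub m s 0).mono_set Ioc_subset_Ioi_self)
      (integrableOn_Ioi_truncPow_sub m s 1), integral_Ioi_truncPow_sub, sub_zero] at h0
    exact eq_sub_of_add_eq h0
  have hhigh : ∫ y in Ioi 1, truncPow m (s - cost κ y) =
      κ⁻¹ * (truncPow (m + 1) (s - 1) / (m + 1)) := by
    rw [setIntegral_congr_fun measurableSet_Ioi
      fun y hy => truncPow_sub_cost_of_one_le m s (le_of_lt hy),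
      integral_comp_mul_left_Ioi (fun z => truncPow m (s - 1 + κ - z)) 1 hκ,
      integral_Ioi_truncPow_sub, mul_one, add_sub_cancel_right, smul_eq_mul]
  rw [← hsplit, setIntegral_union Ioc_disjoint_Ioi_same measurableSet_Ioi
    (hint.mono_set Ioc_subset_Ioi_self) (hint.mono_set (Ioi_subset_Ioi zero_le_one)), hlow, hhigh]
  ring

lemma isClosed_costRegion (κ : ℝ) (d : ℕ) (s : ℝ) : IsClosed (costRegion κ d s) := by
  simp only [costRegion, ofPred_and, ofPred_forall]
  exact (isClosed_iInter fun i => isClosed_le (by fun_prop) (by fun_prop)).inter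
    (isClosed_le (by fun_prop) (by fun_prop))

lemma costRegion_subset_Icc (hκ : 0 < κ) (d : ℕ) (s : ℝ) :
    costRegion κ d s ⊆ Icc 0 fun _ => 1 + s / κ := by
  rintro l ⟨hl, hs⟩
  refine ⟨hl, fun i => ?_⟩
  have hcost : cost κ (l i) ≤ s :=
    (Finset.single_le_sum (fun j _ => cost_nonneg hκ.le (hl j)) (Finset.mem_univ i)).trans hs
  have hmin : 0 ≤ min (l i) 1 := le_min (hl i) zero_le_one
  have hmax : max (l i - 1) 0 ≤ s / κ := (le_div_iff₀' hκ).2 (by rw [cost] at hcost; linarith)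
  rw [← min_one_add_max_sub_one (l i)]
  exact add_le_add (min_le_right _ _) hmax

lemma volume_costRegion_lt_top (hκ : 0 < κ) (d : ℕ) (s : ℝ) :
    volume (costRegion κ d s) < ⊤ :=
  (measure_mono (costRegion_subset_Icc hκ d s)).trans_lt isCompact_Icc.measure_lt_top

lemma cons_mem_costRegion {d : ℕ} {s y : ℝ} {l : Fin d → ℝ} :
    (Fin.cons y l : Fin (d + 1) → ℝ) ∈ costRegion κ (d + 1) s ↔
      0 ≤ y ∧ l ∈ costRegion κ d (s - cost κ y) := by
  simp only [costRegion, mem_ofPred_eq, Fin.forall_fin_succ, Fin.sum_univ_succ, Fin.cons_zero,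
    Fin.cons_succ, le_sub_iff_add_le', and_assoc]

lemma volume_costRegion_succ (κ : ℝ) (d : ℕ) (s : ℝ) :
    volume (costRegion κ (d + 1) s) = ∫⁻ y in Ici 0, volume (costRegion κ d (s - cost κ y)) := by
  have hpres := (volume_preserving_piFinSuccAbove (fun _ : Fin (d + 1) => ℝ) 0).symm
  have hmeas := (isClosed_costRegion κ (d + 1) s).measurableSet
  rw [← hpres.measure_preimage hmeas.nullMeasurableSet, Measure.volume_eq_prod,
    Measure.prod_apply (hpres.measurable hmeas), ← lintegral_indicator measurableSet_Ici]
  refine lintegral_congr fun y => ?_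
  have hslice : Prod.mk y ⁻¹' ((MeasurableEquiv.piFinSuccAbove (fun _ => ℝ) 0).symm ⁻¹'
      costRegion κ (d + 1) s) = {l | 0 ≤ y ∧ l ∈ costRegion κ d (s - cost κ y)} := by
    ext l
    change Fin.insertNth (α := fun _ => ℝ) 0 y l ∈ costRegion κ (d + 1) s ↔ _
    rw [Fin.insertNth_zero]
    exact cons_mem_costRegion
  rw [hslice]
  by_cases hy : 0 ≤ y <;> simp [hy]

lemma volume_real_costRegion_succ (hκ : 0 < κ) (d : ℕ) (s : ℝ) :
    volume.real (costRegion κ (d + 1) s) =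
      ∫ y in Ioi 0, volume.real (costRegion κ d (s - cost κ y)) := by
  have hmono : Monotone fun t => volume (costRegion κ d t) := fun _ _ h =>
    measure_mono fun _ hl => ⟨hl.1, hl.2.trans h⟩
  have hmeas : Measurable fun y => volume (costRegion κ d (s - cost κ y)) :=
    hmono.measurable.comp (by fun_prop)
  rw [← integral_Ici_eq_integral_Ioi, measureReal_def, volume_costRegion_succ]
  exact (integral_toReal hmeas.aemeasurable
    (ae_of_all _ fun y => volume_costRegion_lt_top hκ d _)).symm

lemma volume_real_costRegion_zero (κ s : ℝ) :
    volume.real (costRegion κ 0 s) = truncPow 0 s := by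
  by_cases hs : 0 ≤ s <;> simp [costRegion, truncPow, hs, measureReal_def, volume_pi]

lemma sum_choose_mul_pow_succ {A : Type*} [CommRing A] (a : A) (g : ℕ → A) (d : ℕ) :
    ∑ j ∈ Finset.range (d + 2), (d + 1).choose j * a ^ j * g j =
      ∑ j ∈ Finset.range (d + 1), d.choose j * a ^ j * (g j + a * g (j + 1)) := by
  have h := Finset.sum_choose_succ_mul (fun j _ => a ^ j * g j) d
  simp only [← mul_assoc] at h
  rw [h, ← Finset.sum_add_distrib]
  exact Finset.sum_congr rfl fun j _ => by ring

theorem volume_real_costRegion (hκ : 0 < κ) (d : ℕ) (s : ℝ) :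
    volume.real (costRegion κ d s) =
      (∑ j ∈ Finset.range (d + 1), d.choose j * (κ⁻¹ - 1) ^ j * truncPow d (s - j)) /
        d.factorial := by
  induction d generalizing s with
  | zero => simp [volume_real_costRegion_zero]
  | succ d ih =>
    have hint (j : ℕ) := integrableOn_Ioi_truncPow_sub_cost hκ d (s - j)
    have hterm (j : ℕ) : ∫ y in Ioi 0, truncPow d (s - cost κ y - j) =
        (truncPow (d + 1) (s - j) + (κ⁻¹ - 1) * truncPow (d + 1) (s - (j + 1 : ℕ))) / (d + 1) := by
      simp only [sub_right_comm s _ (j : ℝ), integral_Ioi_truncPow_sub_cost hκ, Nat.cast_succ,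
        sub_add_eq_sub_sub]
    simp only [sub_right_comm s] at hint
    rw [volume_real_costRegion_succ hκ]
    simp only [ih]
    rw [integral_div, integral_finsetSum _ fun j _ => (hint j).const_mul _]
    simp only [integral_const_mul, hterm, ← mul_div_assoc, ← Finset.sum_div]
    rw [sum_choose_mul_pow_succ (κ⁻¹ - 1) fun j => truncPow (d + 1) (s - j), Nat.factorial_succ,
      Nat.cast_mul, Nat.cast_succ, ← div_div]

end Volume

theorem stmt17_general {F : Type} [Field F] {k n : ℕ} (hk : 0 < k) (hkn : 2 * k ≤ n)
    (G : Matrix (Fin k) (Fin n) F) (hsys : IsSystematic (by omega) G) (hmds : IsMDS G) :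
    MeasureTheory.volume (SRRG G) =
      ENNReal.ofReal ((∑ j ∈ Finset.range (k + 1),
        k.choose j * ((k : ℝ)⁻¹ - 1) ^ j * ((n : ℝ) - j) ^ k) / k.factorial) := by
  have hregion : SRRG G = costRegion k k n :=
    (srrg_subset_costRegion hsys hmds).antisymm (costRegion_subset_srrg hsys hmds hkn)
  have hκ : (0 : ℝ) < k := mod_cast hk
  rw [hregion, ← MeasureTheory.ofReal_measureReal (volume_costRegion_lt_top hκ k n).ne,
    volume_real_costRegion hκ]
  congr 2
  refine Finset.sum_congr rfl fun j hj => ?_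
  have hjn : j ≤ n := by
    have := Finset.mem_range.1 hj
    omega
  rw [truncPow_of_nonneg k (sub_nonneg.2 (Nat.cast_le.2 hjn))]

theorem stmt17 {F : Type} [Field F] [Fintype F] {n : ℕ} (hn : 6 ≤ n)
    (G : Matrix (Fin 3) (Fin n) F)
    (hcol : ∀ ν, matCol G ν ≠ 0)
    -- `G` is systematic: its first `3` columns form the identity matrix
    (hsys : ∀ j : Fin 3, matCol G (Fin.castLE (by omega) j) = Pi.single j 1)
    -- `G` is MDS: every `3` columns are linearly independent
    (hmds : ∀ S : Finset (Fin n), S.card = 3 →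
      LinearIndependent F (fun ν : {x : Fin n // x ∈ S} => matCol G ν.1)) :
    MeasureTheory.volume (SRRG G) =
      ENNReal.ofReal (((n : ℝ) ^ 3 + 18 * (n : ℝ) ^ 2 + 54 * (n : ℝ) - 18) / 162) := by
  rw [stmt17_general (k := 3) (by norm_num) hn G hsys hmds]
  congr 1
  norm_num [Finset.sum_range_succ, Nat.choose, Nat.factorial]
  ring
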